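/- In any principal–agent instance, the infimum over deterministic contracts p ∈ ℝ_{≥0}^Ω of the regret R(p) is at most 4·√(2·d(C)). -/

import Mathlib

open Finset

variable {A Ω : Type} [Fintype A] [Fintype Ω] [Nonempty A] [Nonempty Ω]

/-- Agent's expected utility `U^a(p,c,a)` of action `a` under contract `p` and costs `c`. -/
noncomputable def Uag (F : A → Ω → ℝ) (p : Ω → ℝ) (c : A → ℝ) (a : A) : ℝ :=
  (∑ ω, F a ω * p ω) - c a

/-- Principal's expected utility when the agent plays action `a` under contract `p`. -/
noncomputable def prinAct (F : A → Ω → ℝ) (r p : Ω → ℝ) (a : A) : ℝ :=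
  ∑ ω, F a ω * (r ω - p ω)

/-- Principal's expected utility `U^p(p,c)`: the agent plays a best response,
with ties among best responses broken in favor of the principal. -/
noncomputable def Uprin (F : A → Ω → ℝ) (r p : Ω → ℝ) (c : A → ℝ) : ℝ :=
  sSup { x | ∃ a : A, (∀ a' : A, Uag F p c a' ≤ Uag F p c a) ∧ x = prinAct F r p a }

/-- A deterministic contract: nonnegative payments. -/
def IsContract (p : Ω → ℝ) : Prop := ∀ ω, 0 ≤ p ω

/-- `OPT(c)`: the supremum over contracts of the principal's expected utility against `c`. -/
noncomputable def OPT (F : A → Ω → ℝ) (r : Ω → ℝ) (c : A → ℝ) : ℝ :=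
  sSup { x | ∃ p : Ω → ℝ, IsContract p ∧ x = Uprin F r p c }

/-- The regret `R(p)` of a deterministic contract `p`. -/
noncomputable def regret (F : A → Ω → ℝ) (r : Ω → ℝ) (C : Set (A → ℝ)) (p : Ω → ℝ) : ℝ :=
  sSup { x | ∃ c ∈ C, x = OPT F r c - Uprin F r p c }

/-- Uncertainty level `d(C)`: the L∞-diameter of the uncertainty set. -/
noncomputable def uncLevel (C : Set (A → ℝ)) : ℝ :=
  sSup { x | ∃ c ∈ C, ∃ c' ∈ C, x = ‖c - c'‖ }

/-- The assumptions defining a principal–agent instance `(A, Ω, r, C, F)`. -/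
structure IsPAInstance (F : A → Ω → ℝ) (r : Ω → ℝ) (C : Set (A → ℝ)) : Prop where
  r_mem : ∀ ω, r ω ∈ Set.Icc (0:ℝ) 1
  F_mem : ∀ a ω, F a ω ∈ Set.Icc (0:ℝ) 1
  F_sum : ∀ a, ∑ ω, F a ω = 1
  C_nonempty : C.Nonempty
  C_mem : ∀ c ∈ C, ∀ a, c a ∈ Set.Icc (0:ℝ) 1
  zero_action : ∃ a : A, ∀ c ∈ C, c a = 0

/-!
Moving a contract `p` a fraction `s` of the way towards the contract `r`, which hands the whole
reward to the agent, adds `s` times the principal's utility to the agent's utility. The agent's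
objective thus contains the principal's with weight `s`, so perturbing the costs by at most `δ`
lowers the principal's utility (measured under `p`) by at most `2δ / s`; the move itself costs the
principal at most `s`. Taking `s` close to `√(2δ)`, every contract for the costs `c₀` has a variant
that loses at most `2√(2δ)`, up to an arbitrarily small error, against all costs within `δ` of `c₀`.
The regret of the variant of a near-optimal contract for `c₀` is at most twice this loss: once for
the contract itself, and once for passing from `OPT(c)` to `OPT(c₀)`.
-/

section PrincipalAgent

open AffineMap

variable {A Ω : Type} [Fintype Ω] {F : A → Ω → ℝ} {r p : Ω → ℝ} {c c₀ : A → ℝ}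
  {C : Set (A → ℝ)} {a a₀ : A} {s ε M x : ℝ}

/-- The action `a` belongs to the best-response set `A*(p, c)`. This is the condition inlined in the
definition of `Uprin`. -/
def IsBestResponse (F : A → Ω → ℝ) (p : Ω → ℝ) (c : A → ℝ) (a : A) : Prop :=
  ∀ a' : A, Uag F p c a' ≤ Uag F p c a

theorem exists_isBestResponse [Finite A] [Nonempty A] (F : A → Ω → ℝ) (p : Ω → ℝ) (c : A → ℝ) :
    ∃ a, IsBestResponse F p c a :=
  Finite.exists_max (Uag F p c)

theorem prinAct_le_one (hF : F a ∈ stdSimplex ℝ Ω) (hr : r ≤ 1) (hp : IsContract p) :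
    prinAct F r p a ≤ 1 :=
  calc prinAct F r p a ≤ ∑ ω, F a ω :=
        sum_le_sum fun ω _ => mul_le_of_le_one_right (hF.1 ω)
          ((sub_le_self _ (hp ω)).trans (hr ω))
    _ = 1 := hF.2

theorem IsBestResponse.prinAct_le_Uprin [Finite A] (ha : IsBestResponse F p c a) :
    prinAct F r p a ≤ Uprin F r p c := by
  refine le_csSup ((Set.finite_range (prinAct F r p)).subset ?_).bddAbove ⟨a, ha, rfl⟩
  rintro _ ⟨b, -, rfl⟩
  exact Set.mem_range_self b

theorem Uprin_le [Finite A] [Nonempty A]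
    (h : ∀ a, IsBestResponse F p c a → prinAct F r p a ≤ M) : Uprin F r p c ≤ M := by
  obtain ⟨a, ha⟩ := exists_isBestResponse F p c
  refine csSup_le ⟨_, a, ha, rfl⟩ ?_
  rintro _ ⟨b, hb, rfl⟩
  exact h b hb

theorem Uprin_le_one [Finite A] [Nonempty A] (hF : ∀ a, F a ∈ stdSimplex ℝ Ω) (hr : r ≤ 1)
    (hp : IsContract p) : Uprin F r p c ≤ 1 :=
  Uprin_le fun a _ => prinAct_le_one (hF a) hr hp

theorem Uprin_self_nonneg [Finite A] [Nonempty A] : 0 ≤ Uprin F r r c := by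
  obtain ⟨a, ha⟩ := exists_isBestResponse F r c
  calc (0 : ℝ) = prinAct F r r a := by simp [prinAct]
    _ ≤ Uprin F r r c := ha.prinAct_le_Uprin

theorem Uprin_le_OPT [Finite A] [Nonempty A] (hF : ∀ a, F a ∈ stdSimplex ℝ Ω) (hr : r ≤ 1)
    (hp : IsContract p) : Uprin F r p c ≤ OPT F r c := by
  refine le_csSup ⟨1, ?_⟩ ⟨p, hp, rfl⟩
  rintro _ ⟨q, hq, rfl⟩
  exact Uprin_le_one hF hr hq

theorem OPT_le (h : ∀ p, IsContract p → Uprin F r p c ≤ M) : OPT F r c ≤ M := by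
  refine csSup_le ⟨_, 0, fun _ => le_rfl, rfl⟩ ?_
  rintro _ ⟨p, hp, rfl⟩
  exact h p hp

theorem exists_isContract_lt_Uprin (hx : x < OPT F r c) :
    ∃ p, IsContract p ∧ x < Uprin F r p c := by
  by_contra! h
  exact hx.not_ge (OPT_le h)

theorem IsContract.lineMap {Ω : Type} {p q : Ω → ℝ} (hp : IsContract p) (hq : IsContract q)
    (hs : s ∈ Set.Icc 0 1) : IsContract (lineMap p q s) := fun ω => by
  rw [lineMap_apply_module]
  exact add_nonneg (mul_nonneg (sub_nonneg.2 hs.2) (hp ω)) (mul_nonneg hs.1 (hq ω))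

theorem prinAct_lineMap (F : A → Ω → ℝ) (r p : Ω → ℝ) (s : ℝ) (a : A) :
    prinAct F r (lineMap p r s) a = (1 - s) * prinAct F r p a := by
  simp only [prinAct, lineMap_apply_module, Pi.add_apply, Pi.smul_apply, smul_eq_mul, mul_sum]
  exact sum_congr rfl fun ω _ => by ring

theorem Uag_lineMap (F : A → Ω → ℝ) (r p : Ω → ℝ) (c : A → ℝ) (s : ℝ) (a : A) :
    Uag F (lineMap p r s) c a = Uag F p c a + s * prinAct F r p a := by
  simp only [Uag, prinAct, lineMap_apply_module, Pi.add_apply, Pi.smul_apply, smul_eq_mul, mul_sum,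
    sub_add_eq_add_sub, ← sum_add_distrib]
  congr 1
  exact sum_congr rfl fun ω _ => by ring

theorem abs_Uag_sub_Uag_le [Fintype A] (F : A → Ω → ℝ) (p : Ω → ℝ) (c c₀ : A → ℝ) (a : A) :
    |Uag F p c₀ a - Uag F p c a| ≤ ‖c - c₀‖ := by
  simpa [Uag] using norm_le_pi_norm (c - c₀) a

theorem IsBestResponse.mul_prinAct_sub_prinAct_le [Fintype A] (ha₀ : IsBestResponse F p c₀ a₀)
    (ha : IsBestResponse F (lineMap p r s) c a) :
    s * (prinAct F r p a₀ - prinAct F r p a) ≤ 2 * ‖c - c₀‖ := by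
  have hmixed : Uag F p c a₀ + s * prinAct F r p a₀ ≤ Uag F p c a + s * prinAct F r p a := by
    simpa only [Uag_lineMap] using ha a₀
  have horig : Uag F p c₀ a ≤ Uag F p c₀ a₀ := ha₀ a
  have hcost := abs_le.1 (abs_Uag_sub_Uag_le F p c c₀ a)
  have hcost₀ := abs_le.1 (abs_Uag_sub_Uag_le F p c c₀ a₀)
  linarith

theorem Uprin_le_Uprin_lineMap_add [Fintype A] [Nonempty A] (hF : ∀ a, F a ∈ stdSimplex ℝ Ω)
    (hr : r ≤ 1) (hp : IsContract p) (hs : 0 < s) :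
    Uprin F r p c₀ ≤ Uprin F r (lineMap p r s) c + 2 * ‖c - c₀‖ / s + s := by
  refine Uprin_le fun a₀ ha₀ => ?_
  obtain ⟨a, ha⟩ := exists_isBestResponse F (lineMap p r s) c
  have hloss : prinAct F r p a₀ - prinAct F r p a ≤ 2 * ‖c - c₀‖ / s :=
    (le_div_iff₀' hs).2 (ha₀.mul_prinAct_sub_prinAct_le ha)
  have hshare : s * prinAct F r p a ≤ s :=
    mul_le_of_le_one_right hs.le (prinAct_le_one (hF a) hr hp)
  calc prinAct F r p a₀
      ≤ (1 - s) * prinAct F r p a + 2 * ‖c - c₀‖ / s + s := by linarith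
    _ = prinAct F r (lineMap p r s) a + 2 * ‖c - c₀‖ / s + s := by rw [prinAct_lineMap]
    _ ≤ Uprin F r (lineMap p r s) c + 2 * ‖c - c₀‖ / s + s := by
        gcongr
        exact ha.prinAct_le_Uprin

theorem exists_isContract_Uprin_le_add_div_add [Fintype A] [Nonempty A]
    (hF : ∀ a, F a ∈ stdSimplex ℝ Ω) (hr₀ : IsContract r) (hr₁ : r ≤ 1) (hp : IsContract p)
    (c₀ : A → ℝ) (hs : 0 < s) :
    ∃ q, IsContract q ∧ ∀ c, Uprin F r p c₀ ≤ Uprin F r q c + 2 * ‖c - c₀‖ / s + s := by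
  rcases le_total s 1 with hs₁ | hs₁
  · exact ⟨lineMap p r s, hp.lineMap hr₀ ⟨hs.le, hs₁⟩,
      fun c => Uprin_le_Uprin_lineMap_add hF hr₁ hp hs⟩
  · refine ⟨r, hr₀, fun c => ?_⟩
    have hloss : 0 ≤ 2 * ‖c - c₀‖ / s := by positivity
    linarith [Uprin_le_one (c := c₀) hF hr₁ hp, Uprin_self_nonneg (F := F) (r := r) (c := c)]

theorem exists_isContract_Uprin_le_add_sqrt [Fintype A] [Nonempty A]
    (hF : ∀ a, F a ∈ stdSimplex ℝ Ω) (hr₀ : IsContract r) (hr₁ : r ≤ 1) (hp : IsContract p)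
    (c₀ : A → ℝ) (δ : ℝ) (hε : 0 < ε) :
    ∃ q, IsContract q ∧
      ∀ c, ‖c - c₀‖ ≤ δ → Uprin F r p c₀ ≤ Uprin F r q c + 2 * √(2 * δ) + ε := by
  -- The summand `ε` keeps the mixing weight positive when `δ = 0`.
  have hs : 0 < √(2 * δ) + ε := by positivity
  obtain ⟨q, hq, hle⟩ := exists_isContract_Uprin_le_add_div_add hF hr₀ hr₁ hp c₀ hs
  refine ⟨q, hq, fun c hc => ?_⟩
  have hδ : 0 ≤ δ := (norm_nonneg _).trans hc
  have hloss : 2 * ‖c - c₀‖ / (√(2 * δ) + ε) ≤ √(2 * δ) := by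
    rw [div_le_iff₀ hs]
    calc 2 * ‖c - c₀‖ ≤ √(2 * δ) * √(2 * δ) := by rw [Real.mul_self_sqrt (by positivity)]; gcongr
      _ ≤ √(2 * δ) * (√(2 * δ) + ε) := by gcongr; linarith
  linarith [hle c]

theorem OPT_le_OPT_add_sqrt [Fintype A] [Nonempty A] (hF : ∀ a, F a ∈ stdSimplex ℝ Ω)
    (hr₀ : IsContract r) (hr₁ : r ≤ 1) (c c₀ : A → ℝ) :
    OPT F r c ≤ OPT F r c₀ + 2 * √(2 * ‖c - c₀‖) := by
  refine OPT_le fun p hp => le_of_forall_pos_le_add fun ε hε => ?_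
  obtain ⟨q, hq, hle⟩ := exists_isContract_Uprin_le_add_sqrt hF hr₀ hr₁ hp c ‖c - c₀‖ hε
  linarith [hle c₀ (norm_sub_rev c₀ c).le, Uprin_le_OPT (c := c₀) hF hr₁ hq]

theorem regret_nonneg [Finite A] [Nonempty A] (hF : ∀ a, F a ∈ stdSimplex ℝ Ω) (hr : r ≤ 1)
    (hp : IsContract p) : 0 ≤ regret F r C p := by
  refine Real.sSup_nonneg ?_
  rintro _ ⟨c, -, rfl⟩
  exact sub_nonneg.2 (Uprin_le_OPT hF hr hp)

theorem regret_le (hC : C.Nonempty) (h : ∀ c ∈ C, OPT F r c - Uprin F r p c ≤ M) :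
    regret F r C p ≤ M := by
  obtain ⟨c₀, hc₀⟩ := hC
  refine csSup_le ⟨_, c₀, hc₀, rfl⟩ ?_
  rintro _ ⟨c, hc, rfl⟩
  exact h c hc

theorem sInf_regret_le_regret [Finite A] [Nonempty A] (hF : ∀ a, F a ∈ stdSimplex ℝ Ω)
    (hr : r ≤ 1) (C : Set (A → ℝ)) (hp : IsContract p) :
    sInf {x | ∃ p : Ω → ℝ, IsContract p ∧ x = regret F r C p} ≤ regret F r C p := by
  refine csInf_le ⟨0, ?_⟩ ⟨p, hp, rfl⟩
  rintro _ ⟨q, hq, rfl⟩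
  exact regret_nonneg hF hr hq

theorem norm_sub_le_uncLevel {A : Type} [Fintype A] {C : Set (A → ℝ)} {c c' : A → ℝ}
    (hC : Bornology.IsBounded C) (hc : c ∈ C) (hc' : c' ∈ C) : ‖c - c'‖ ≤ uncLevel C := by
  obtain ⟨K, hK⟩ := Metric.isBounded_iff.1 hC
  refine le_csSup ⟨K, ?_⟩ ⟨c, hc, c', hc', rfl⟩
  rintro _ ⟨u, hu, v, hv, rfl⟩
  exact dist_eq_norm u v ▸ hK hu hv

theorem exists_isContract_regret_le [Fintype A] [Nonempty A] (hF : ∀ a, F a ∈ stdSimplex ℝ Ω)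
    (hr₀ : IsContract r) (hr₁ : r ≤ 1) (hC : C.Nonempty) (hCb : Bornology.IsBounded C)
    (hε : 0 < ε) :
    ∃ q, IsContract q ∧ regret F r C q ≤ 4 * √(2 * uncLevel C) + ε := by
  obtain ⟨c₀, hc₀⟩ := hC
  obtain ⟨p, hp, hopt⟩ := exists_isContract_lt_Uprin (sub_lt_self (OPT F r c₀) (half_pos hε))
  obtain ⟨q, hq, hrobust⟩ :=
    exists_isContract_Uprin_le_add_sqrt hF hr₀ hr₁ hp c₀ (uncLevel C) (half_pos hε)
  refine ⟨q, hq, regret_le ⟨c₀, hc₀⟩ fun c hc => ?_⟩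
  have hdist : ‖c - c₀‖ ≤ uncLevel C := norm_sub_le_uncLevel hCb hc hc₀
  have hOPT : OPT F r c ≤ OPT F r c₀ + 2 * √(2 * uncLevel C) :=
    (OPT_le_OPT_add_sqrt hF hr₀ hr₁ c c₀).trans (by gcongr)
  linarith [hrobust c hdist]

theorem det_regret_upper_bound_general [Fintype A] [Nonempty A] (hF : ∀ a, F a ∈ stdSimplex ℝ Ω)
    (hr₀ : IsContract r) (hr₁ : r ≤ 1) (hC : C.Nonempty) (hCb : Bornology.IsBounded C) :
    sInf {x | ∃ p : Ω → ℝ, IsContract p ∧ x = regret F r C p} ≤ 4 * √(2 * uncLevel C) := by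
  refine le_of_forall_pos_le_add fun ε hε => ?_
  obtain ⟨q, hq, hle⟩ := exists_isContract_regret_le hF hr₀ hr₁ hC hCb hε
  exact (sInf_regret_le_regret hF hr₁ C hq).trans hle

theorem IsPAInstance.mem_stdSimplex (h : IsPAInstance F r C) (a : A) : F a ∈ stdSimplex ℝ Ω :=
  ⟨fun ω => (h.F_mem a ω).1, h.F_sum a⟩

theorem IsPAInstance.isBounded (h : IsPAInstance F r C) : Bornology.IsBounded C :=
  Bornology.forall_isBounded_image_eval_iff.1 fun a => (Metric.isBounded_Icc (0 : ℝ) 1).subset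
    (Set.image_subset_iff.2 fun c hc => h.C_mem c hc a)

end PrincipalAgent

/-- The infimum over deterministic contracts of the regret is at most
`4√(2 d(C))`. -/
theorem det_regret_upper_bound
    {A Ω : Type} [Fintype A] [Fintype Ω] [Nonempty A] [Nonempty Ω]
    (F : A → Ω → ℝ) (r : Ω → ℝ) (C : Set (A → ℝ))
    (hInst : IsPAInstance F r C) :
    sInf { x | ∃ p : Ω → ℝ, IsContract p ∧ x = regret F r C p }
      ≤ 4 * Real.sqrt (2 * uncLevel C) :=
  det_regret_upper_bound_general hInst.mem_stdSimplex (fun ω => (hInst.r_mem ω).1)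
    (fun ω => (hInst.r_mem ω).2) hInst.C_nonempty hInst.isBounded
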